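/- Let f ∈ R = K[x_0, …, x_n] be a quasi-homogeneous polynomial of type α whose degree equals w = α_0 + ⋯ + α_n, with an isolated singularity. If p ≥ w(n − 2) + 1, then fpt(f) = 1 if and only if the coefficient of (x_0 x_1 ⋯ x_n)^{p−1} in f^{p−1} is nonzero. -/

import Mathlib

/-!
Since `deg f = w = ∑ αᵢ`, the polynomial `f ^ (q - 1)` has weighted degree `w (q - 1)`, and the only
monomial of that degree with all exponents `< q` is `(x_0 ⋯ x_n)^(q - 1)`. Hence `f ^ (q - 1)` is
congruent modulo `m^{[q]}` to `c • (x_0 ⋯ x_n)^(q - 1)`, where `c` is its coefficient there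
(`pow_sub_monomial_mem`).

If the coefficient for `q = p` vanishes, then `f ^ (p - 1) ∈ m^{[p]}`, and Frobenius gives
`f ^ ((p - 1) p^e) ∈ m^{[p^(e+1)]}`; so `μ_f(p^(e+1)) / p^(e+1) ≤ (p - 1) / p` for all `e` and the
limit cannot be `1`.

If it does not vanish, then the factorisation
`f ^ (p^(e+1) - 1) = (f ^ (p^e - 1)) ^ p * f ^ (p - 1)` shows inductively, as in Fedder's criterion,
that `f ^ (p^e - 1) ∉ m^{[p^e]}` for every `e` (`exists_pow_sub_monomial_mem`). As `f ∈ m` gives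
`f ^ (p^e) ∈ m^{[p^e]}`, this means `μ_f(p^e) = p^e`, and the sequence is constantly `1`.
-/

open MvPolynomial Filter Topology

/-- The Frobenius power `m^{[q]}` of the maximal ideal `m = (x_0, …, x_n)` of
`R = K[x_0, …, x_n]`, i.e. the ideal generated by `x_0^q, …, x_n^q`. -/
noncomputable def frobeniusPower (K : Type*) [Field K] (n q : ℕ) :
    Ideal (MvPolynomial (Fin (n + 1)) K) :=
  Ideal.span (Set.range fun i : Fin (n + 1) => (X i : MvPolynomial (Fin (n + 1)) K) ^ q)

/-- `μ_f(q) = min {k ∈ ℕ : f^k ∈ m^{[q]}}`. -/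
noncomputable def muF {K : Type*} [Field K] {n : ℕ}
    (f : MvPolynomial (Fin (n + 1)) K) (q : ℕ) : ℕ :=
  sInf {k : ℕ | f ^ k ∈ frobeniusPower K n q}

/-- `f` has an isolated singularity: its partial derivatives `∂f/∂x_0, …, ∂f/∂x_n`
form a regular sequence in `R`. -/
def HasIsolatedSingularity {K : Type*} [Field K] {n : ℕ}
    (f : MvPolynomial (Fin (n + 1)) K) : Prop :=
  RingTheory.Sequence.IsRegular (MvPolynomial (Fin (n + 1)) K)
    ((List.finRange (n + 1)).map fun i => MvPolynomial.pderiv i f)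

/-- `fpt(f) = c`: the sequence `μ_f(p^e)/p^e` converges to `c`. -/
def HasFpt {K : Type*} [Field K] {n : ℕ} (p : ℕ)
    (f : MvPolynomial (Fin (n + 1)) K) (c : ℝ) : Prop :=
  Tendsto (fun e : ℕ => (muF f (p ^ e) : ℝ) / ((p : ℝ) ^ e)) atTop (𝓝 c)

/-- The exponent vector `(k, …, k)`. -/
noncomputable def constExp (n k : ℕ) : Fin (n + 1) →₀ ℕ :=
  Finsupp.equivFunOnFinite.symm fun _ : Fin (n + 1) => k

lemma constExp_apply (n k : ℕ) (i : Fin (n + 1)) : constExp n k i = k := rfl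

section

variable {K : Type*} [Field K] {n : ℕ}

lemma mem_frobeniusPower_iff (q : ℕ) (g : MvPolynomial (Fin (n + 1)) K) :
    g ∈ frobeniusPower K n q ↔ ∀ m ∈ g.support, ∃ i, q ≤ m i := by
  have h : (Set.range fun i : Fin (n + 1) => (X i : MvPolynomial (Fin (n + 1)) K) ^ q) =
      (fun s => monomial s (1 : K)) '' Set.range fun i : Fin (n + 1) => Finsupp.single i q := by
    rw [← Set.range_comp]
    congr 1
    funext i
    simp [X_pow_eq_monomial]
  rw [frobeniusPower, h, mem_ideal_span_monomial_image]
  simp [Finsupp.single_le_iff]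

lemma pow_mem_frobeniusPower (p : ℕ) [Fact p.Prime] [CharP K p] (e q : ℕ)
    {g : MvPolynomial (Fin (n + 1)) K} (hg : g ∈ frobeniusPower K n q) :
    g ^ p ^ e ∈ frobeniusPower K n (q * p ^ e) := by
  have h := Ideal.mem_map_of_mem (iterateFrobenius (MvPolynomial (Fin (n + 1)) K) p e) hg
  rw [frobeniusPower, Ideal.map_span, ← Set.range_comp] at h
  simpa only [frobeniusPower, Function.comp_def, iterateFrobenius_def, ← pow_mul] using h

/-- A monomial of weighted degree `k * ∑ αᵢ` with all exponents at most `k` is `(x_0 ⋯ x_n)^k`. -/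
lemma eq_constExp (α : Fin (n + 1) → ℕ) (hα : ∀ i, 0 < α i) (k : ℕ) (m : Fin (n + 1) →₀ ℕ)
    (hm : Finsupp.weight α m = k * ∑ i, α i) (hk : ∀ i, m i ≤ k) : m = constExp n k := by
  have h1 : ∑ i, m i * α i = ∑ i, k * α i := by
    rw [← Finset.mul_sum, ← hm, Finsupp.weight_apply, Finsupp.sum_fintype _ _ (by simp)]
    simp
  have h2 := (Finset.sum_eq_sum_iff_of_le
    (fun i _ => Nat.mul_le_mul_right (α i) (hk i))).1 h1
  ext i
  exact Nat.eq_of_mul_eq_mul_right (hα i) (h2 i (Finset.mem_univ i))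

lemma pow_sub_monomial_mem (α : Fin (n + 1) → ℕ) (hα : ∀ i, 0 < α i)
    (f : MvPolynomial (Fin (n + 1)) K) (hf : f.IsWeightedHomogeneous α (∑ i, α i))
    (q : ℕ) :
    f ^ (q - 1) - monomial (constExp n (q - 1)) (coeff (constExp n (q - 1)) (f ^ (q - 1))) ∈
      frobeniusPower K n q := by
  rw [mem_frobeniusPower_iff]
  intro m hm
  by_contra! hlt
  rw [mem_support_iff, coeff_sub, coeff_monomial] at hm
  by_cases hmc : constExp n (q - 1) = m
  · simp [hmc] at hm
  · rw [if_neg hmc, sub_zero] at hm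
    have hdeg := hf.pow (q - 1) hm
    rw [smul_eq_mul] at hdeg
    exact hmc (eq_constExp α hα _ m hdeg fun i => Nat.le_sub_one_of_lt (hlt i)).symm

lemma monomial_constExp_notMem (q : ℕ) (hq : 0 < q) {c : K} (hc : c ≠ 0) :
    monomial (constExp n (q - 1)) c ∉ frobeniusPower K n q := by
  classical
  rw [mem_frobeniusPower_iff, support_monomial, if_neg hc]
  simp only [Finset.mem_singleton, forall_eq, constExp_apply]
  rintro ⟨_, h⟩
  omega

/-- `(x_0 ⋯ x_n)^(r(q-1)) m^{[r]} ⊆ m^{[qr]}`. -/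
lemma monomial_mul_mem (q r : ℕ) (hq : 0 < q) (c : K) {g : MvPolynomial (Fin (n + 1)) K}
    (hg : g ∈ frobeniusPower K n r) :
    monomial (constExp n (r * (q - 1))) c * g ∈ frobeniusPower K n (q * r) := by
  rw [mem_frobeniusPower_iff] at hg ⊢
  intro m hm
  rw [mem_support_iff, coeff_monomial_mul'] at hm
  split_ifs at hm with hle
  · obtain ⟨i, hi⟩ := hg _ (mem_support_iff.2 (right_ne_zero_of_mul hm))
    refine ⟨i, ?_⟩
    have hle' := hle i
    rw [Finsupp.tsub_apply, constExp_apply] at hi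
    rw [constExp_apply] at hle'
    obtain ⟨t, rfl⟩ := Nat.exists_eq_succ_of_ne_zero hq.ne'
    simp only [Nat.succ_eq_add_one, Nat.add_sub_cancel] at hi hle' ⊢
    linarith [Nat.sub_add_cancel hle', mul_comm r t, add_mul t 1 r]
  · exact absurd rfl hm

/-- The inductive form of Fedder's criterion: if `f ^ (p^e - 1) ≡ c (x_0 ⋯ x_n)^(p^e - 1)` modulo
`m^{[p^e]}`, then the same holds for `e + 1` with `c` replaced by `c ^ p * c₁`. -/
lemma exists_pow_sub_monomial_mem {p : ℕ} [Fact p.Prime] [CharP K p]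
    (f : MvPolynomial (Fin (n + 1)) K) {c₁ : K} (hc₁ : c₁ ≠ 0)
    (h₁ : f ^ (p - 1) - monomial (constExp n (p - 1)) c₁ ∈ frobeniusPower K n p) (e : ℕ) :
    ∃ c : K, c ≠ 0 ∧
      f ^ (p ^ e - 1) - monomial (constExp n (p ^ e - 1)) c ∈ frobeniusPower K n (p ^ e) := by
  have hp0 : 0 < p := (Fact.out : p.Prime).pos
  induction e with
  | zero =>
    refine ⟨1, one_ne_zero, ?_⟩
    have h0 : constExp n (p ^ 0 - 1) = 0 := by
      ext i
      simp [constExp_apply]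
    rw [h0]
    simp
  | succ e ih =>
    obtain ⟨c, hc, h⟩ := ih
    refine ⟨c ^ p * c₁, mul_ne_zero (pow_ne_zero _ hc) hc₁, ?_⟩
    have hq : 0 < p ^ e := Nat.pow_pos hp0
    have hexp : p ^ (e + 1) - 1 = p * (p ^ e - 1) + (p - 1) := by
      obtain ⟨t, ht⟩ := Nat.exists_eq_succ_of_ne_zero hq.ne'
      rw [pow_succ, ht, Nat.succ_eq_add_one, Nat.add_sub_cancel, add_mul, mul_comm t p]
      omega
    have hF := pow_mem_frobeniusPower p 1 _ h
    rw [pow_one, ← pow_succ, sub_pow_char, monomial_pow, ← pow_mul] at hF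
    have hsm : p • constExp n (p ^ e - 1) = constExp n (p * (p ^ e - 1)) := by
      ext i
      simp [constExp_apply]
    rw [hsm] at hF
    have hM := monomial_mul_mem (p ^ e) p hq (c ^ p) h₁
    rw [← pow_succ] at hM
    have hadd : constExp n (p ^ (e + 1) - 1) =
        constExp n (p * (p ^ e - 1)) + constExp n (p - 1) := by
      ext i
      simp only [Finsupp.add_apply, constExp_apply, hexp]
    have hsum := add_mem (Ideal.mul_mem_right (f ^ (p - 1)) _ hF) hM
    rw [hadd, ← monomial_mul, hexp, pow_add f]
    convert hsum using 1
    rw [mul_comm (p ^ e - 1) p]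
    ring

end

/-- let `f` be quasi-homogeneous of type `α` of degree
`w = α_0 + ⋯ + α_n` with an isolated singularity. If `p ≥ w(n − 2) + 1`, then
`fpt(f) = 1` iff the coefficient of `(x_0 ⋯ x_n)^{p−1}` in `f^{p−1}` is nonzero. -/
theorem statement12 {K : Type*} [Field K] {p : ℕ} [Fact p.Prime] [CharP K p] {n : ℕ}
    (α : Fin (n + 1) → ℕ) (hα : ∀ i, 0 < α i) (w : ℕ) (hw : w = ∑ i, α i)
    (f : MvPolynomial (Fin (n + 1)) K)
    (hf : f.IsWeightedHomogeneous α w)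
    (hsing : HasIsolatedSingularity f)
    (hp : (w : ℤ) * ((n : ℤ) - 2) + 1 ≤ (p : ℤ)) :
    HasFpt p f 1 ↔
      coeff (Finsupp.equivFunOnFinite.symm fun _ : Fin (n + 1) => p - 1) (f ^ (p - 1)) ≠ 0 := by
  have hp0 : 0 < p := (Fact.out : p.Prime).pos
  subst hw
  have hmem := pow_sub_monomial_mem α hα f hf p
  change _ ↔ coeff (constExp n (p - 1)) (f ^ (p - 1)) ≠ 0
  constructor
  · intro hlim hc
    rw [hc, monomial_zero, sub_zero] at hmem
    have hbound : ∀ e : ℕ,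
        (muF f (p ^ (e + 1)) : ℝ) / (p : ℝ) ^ (e + 1) ≤ ((p - 1 : ℕ) : ℝ) / p := by
      intro e
      have hle : muF f (p ^ (e + 1)) ≤ (p - 1) * p ^ e := by
        apply Nat.sInf_le
        change f ^ _ ∈ frobeniusPower K n _
        rw [pow_mul, pow_succ']
        exact pow_mem_frobeniusPower p e p hmem
      have hp' : (0 : ℝ) < p := by exact_mod_cast hp0
      have hle' : (muF f (p ^ (e + 1)) : ℝ) ≤ ((p - 1 : ℕ) : ℝ) * (p : ℝ) ^ e := by
        exact_mod_cast hle
      rw [div_le_div_iff₀ (by positivity) hp', pow_succ (p : ℝ), ← mul_assoc]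
      exact mul_le_mul_of_nonneg_right hle' hp'.le
    have h1 := le_of_tendsto' ((tendsto_add_atTop_iff_nat 1).2 hlim) hbound
    have hp' : (0 : ℝ) < p := by exact_mod_cast hp0
    rw [le_div_iff₀ hp', one_mul] at h1
    have h2 : p ≤ p - 1 := by exact_mod_cast h1
    omega
  · intro hc
    have hmu : ∀ e : ℕ, muF f (p ^ e) = p ^ e := by
      intro e
      have hq : 0 < p ^ e := Nat.pow_pos hp0
      have hf1 : f ∈ frobeniusPower K n 1 := by
        rw [mem_frobeniusPower_iff]
        intro m hm
        by_contra! hlt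
        -- A constant term would have degree `0`, whereas `∑ αᵢ > 0`.
        have hm0 : m = 0 := by
          ext i
          simpa using hlt i
        have hdeg := hf (mem_support_iff.1 hm)
        rw [hm0, map_zero] at hdeg
        have := Finset.sum_pos (fun i _ => hα i) (Finset.univ_nonempty (α := Fin (n + 1)))
        omega
      have hmemq : f ^ p ^ e ∈ frobeniusPower K n (p ^ e) := by
        simpa using pow_mem_frobeniusPower p e 1 hf1
      refine le_antisymm (Nat.sInf_le hmemq) (le_csInf ⟨_, hmemq⟩ ?_)
      intro k hk
      by_contra! hlt
      obtain ⟨c, hc0, h⟩ := exists_pow_sub_monomial_mem f hc hmem e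
      have hk' : f ^ (p ^ e - 1) ∈ frobeniusPower K n (p ^ e) :=
        Ideal.mem_of_dvd _ (pow_dvd_pow f (Nat.le_sub_one_of_lt hlt)) hk
      exact monomial_constExp_notMem (p ^ e) hq hc0 (by simpa using sub_mem hk' h)
    refine tendsto_const_nhds.congr fun e => ?_
    have hp' : (p : ℝ) ≠ 0 := by exact_mod_cast hp0.ne'
    rw [hmu, Nat.cast_pow, div_self (pow_ne_zero _ hp')]
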